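/- There exists a linear code over the field with 11 elements of length 110, dimension 87, minimum distance exactly 3, and locality 4; its parameters attain the Singleton-type bound d ≤ n − k − ⌈k/r⌉ + 2 for codes of length n, dimension k, minimum distance d, and locality r, and its length satisfies n = q^2 − q for q = 11. -/

import Mathlib

/-!
Let `π : P → ι` be a projection with fibres of size `r + 1` and `a : P → K` a function separating
the points of each fibre. The words whose sum over every fibre vanishes, and whose sum weighted by
`a` vanishes, form the code with parity-check columns `(e_{π p}, a p)`. A fibre sum recovers any
coordinate from the `r` others in its fibre. Two columns are independent because a relation
between them can only occur within a fibre, where `a` separates points, whereas three columns over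
one fibre are dependent; so the minimum distance is `3`. The columns span, so the dimension is
`|P| - |ι| - 1`.

This keeps from the quintic surface only its splitting into fibres of size `5`: over `𝔽₁₁`, the
`110` points are cut into `22` blocks of consecutive integers, which their residues modulo `11`
separate.
-/

open Finset

theorem natCard_ne_zero_eq_hammingNorm {P : Type*} {β : P → Type*} [Fintype P]
    [∀ p, Zero (β p)] [∀ p, DecidableEq (β p)] (x : ∀ p, β p) :
    Nat.card {p // x p ≠ 0} = hammingNorm x :=
  Nat.card_eq_fintype_card.trans (Fintype.card_subtype _)

theorem le_hammingNorm_of_linearIndepOn {R V P : Type*} [Fintype P] [Ring R] [DecidableEq R]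
    [AddCommGroup V] [Module R V] {v : P → V} {d : ℕ}
    (hv : ∀ s : Finset P, #s < d → LinearIndepOn R v (s : Set P)) {x : P → R}
    (hx : x ∈ LinearMap.ker (Fintype.linearCombination R v)) (hx0 : x ≠ 0) :
    d ≤ hammingNorm x := by
  by_contra! hlt
  have hsum : ∑ p with x p ≠ 0, x p • v p = 0 := by
    rw [LinearMap.mem_ker, Fintype.linearCombination_apply] at hx
    rw [← hx]
    exact sum_filter_of_ne fun p _ => left_ne_zero_of_smul
  obtain ⟨p, hp⟩ := Function.ne_iff.mp hx0
  exact hp (linearIndepOn_finset_iff.mp (hv _ hlt) x hsum p (by simpa using hp))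

/-- Locality `r` of a linear code `C`, with the coordinates in `P`: each coordinate of a codeword
is determined by at most `r` other coordinates. -/
def HasLocality {R P : Type*} [Semiring R] (C : Submodule R (P → R)) (r : ℕ) : Prop :=
  ∀ i, ∃ I : Finset P, i ∉ I ∧ #I ≤ r ∧
    ∀ x ∈ C, ∀ y ∈ C, (∀ j ∈ I, x j = y j) → x i = y i

section FiberCode

variable {R P ι : Type*} [CommRing R] [DecidableEq ι]

/-- The column at `p` of the parity-check matrix of `fiberCode`: one check for each fibre of `π`,
and a last one with the weights `a`. -/
def fiberCheck (π : P → ι) (a : P → R) (p : P) : (ι → R) × R :=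
  (Pi.single (π p) 1, a p)

theorem linearIndepOn_fiberCheck_pair [IsDomain R] {π : P → ι} {a : P → R}
    (ha : Function.Injective fun p => (π p, a p)) {p q : P} (hpq : p ≠ q) :
    LinearIndepOn R (fiberCheck π a) {p, q} := by
  rw [LinearIndepOn.pair_iff _ hpq]
  intro c d h
  have hfib (i : ι) := congrFun (congrArg Prod.fst h) i
  have hglob : c * a p + d * a q = 0 := congrArg Prod.snd h
  by_cases hπ : π p = π q
  · have hcd : c + d = 0 := by simpa [fiberCheck, hπ] using hfib (π q)
    have hapq : a p - a q ≠ 0 := sub_ne_zero.mpr fun hapq => hpq (ha (Prod.ext hπ hapq))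
    have hc : c = 0 := by
      refine (mul_eq_zero.mp ?_).resolve_right hapq
      linear_combination hglob - a q * hcd
    exact ⟨hc, by simpa [hc] using hcd⟩
  · exact ⟨by simpa [fiberCheck, hπ] using hfib (π p),
      by simpa [fiberCheck, Ne.symm hπ] using hfib (π q)⟩

theorem linearIndepOn_fiberCheck_of_card_lt_three [IsDomain R] {π : P → ι} {a : P → R}
    (ha : Function.Injective fun p => (π p, a p)) {s : Finset P} (hs : #s < 3) :
    LinearIndepOn R (fiberCheck π a) (s : Set P) := by
  classical
  obtain h | h | h : #s = 0 ∨ #s = 1 ∨ #s = 2 := by omega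
  · simp [card_eq_zero.mp h]
  · obtain ⟨p, rfl⟩ := card_eq_one.mp h
    rw [coe_singleton]
    refine LinearIndepOn.singleton' fun c hc => ?_
    simpa [fiberCheck] using congrFun (congrArg Prod.fst hc) (π p)
  · obtain ⟨p, q, hpq, rfl⟩ := card_eq_two.mp h
    simpa using linearIndepOn_fiberCheck_pair ha hpq

theorem span_range_fiberCheck {K : Type*} [Field K] [Finite ι] {π : P → ι} {a : P → K}
    (hπ : Function.Surjective π) {p q : P} (hpq : π p = π q) (ha : a p ≠ a q) :
    Submodule.span K (Set.range (fiberCheck π a)) = ⊤ := by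
  have := Fintype.ofFinite ι
  set S := Submodule.span K (Set.range (fiberCheck π a))
  have hcol (s : P) : fiberCheck π a s ∈ S := Submodule.subset_span ⟨s, rfl⟩
  have hglob : ((0, 1) : (ι → K) × K) ∈ S := by
    have hdiff := S.smul_mem (a p - a q)⁻¹ (S.sub_mem (hcol p) (hcol q))
    simpa [fiberCheck, hpq, inv_mul_cancel₀ (sub_ne_zero.mpr ha)] using hdiff
  have hfib (i : ι) : ((Pi.single i 1, 0) : (ι → K) × K) ∈ S := by
    obtain ⟨s, rfl⟩ := hπ i
    simpa [fiberCheck] using S.sub_mem (hcol s) (S.smul_mem (a s) hglob)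
  refine eq_top_iff.mpr fun y _ => ?_
  have hy : y = ∑ i, y.1 i • ((Pi.single i 1, 0) : (ι → K) × K) + y.2 • (0, 1) := by
    ext i
    · simp [Prod.fst_sum, Pi.single_apply]
    · simp [Prod.snd_sum]
  rw [hy]
  exact S.add_mem (S.sum_mem fun i _ => S.smul_mem _ (hfib i)) (S.smul_mem _ hglob)

variable [Fintype P]

/-- The code of all words whose sum over each fibre of `π` and whose sum weighted by `a` vanish.
It stands in for the evaluation code on a surface fibred by `π`. -/
def fiberCode (π : P → ι) (a : P → R) : Submodule R (P → R) :=
  LinearMap.ker (Fintype.linearCombination R (fiberCheck π a))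

variable {π : P → ι} {a : P → R}

theorem sum_fiber_eq_zero_of_mem_fiberCode {x : P → R} (hx : x ∈ fiberCode π a) (i : ι) :
    ∑ p with π p = i, x p = 0 := by
  have h := congrArg (fun y : (ι → R) × R => y.1 i) (LinearMap.mem_ker.mp hx)
  simpa [fiberCheck, Fintype.linearCombination_apply, Prod.fst_sum, Pi.single_apply, sum_filter,
    eq_comm] using h

theorem hasLocality_fiberCode {r : ℕ} (hr : ∀ i, #{p | π p = i} ≤ r + 1) :
    HasLocality (fiberCode π a) r := by
  classical
  intro p
  have hp : p ∈ ({q | π q = π p} : Finset P) := by simp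
  refine ⟨({q | π q = π p} : Finset P).erase p, notMem_erase _ _, ?_, fun x hx y hy hxy => ?_⟩
  · rw [card_erase_of_mem hp]
    exact Nat.sub_le_of_le_add (hr _)
  · have hx := sum_fiber_eq_zero_of_mem_fiberCode hx (π p)
    have hy := sum_fiber_eq_zero_of_mem_fiberCode hy (π p)
    rw [← add_sum_erase _ _ hp] at hx hy
    rw [sum_congr rfl hxy] at hx
    exact add_right_cancel (hx.trans hy.symm)

theorem exists_mem_fiberCode_hammingNorm_eq_three [DecidableEq R] {p q s : P} (hq : π q = π p)
    (hs : π s = π p) (hpq : a p ≠ a q) (hqs : a q ≠ a s) (hsp : a s ≠ a p) :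
    ∃ x ∈ fiberCode π a, hammingNorm x = 3 := by
  classical
  -- The coefficients are the `2 × 2` minors of the rows `(1, 1, 1)` and `(a p, a q, a s)`.
  let x : P → R :=
    Pi.single p (a q - a s) + Pi.single q (a s - a p) + Pi.single s (a p - a q)
  have hne : p ≠ q ∧ q ≠ s ∧ s ≠ p :=
    ⟨ne_of_apply_ne a hpq, ne_of_apply_ne a hqs, ne_of_apply_ne a hsp⟩
  refine ⟨x, ?_, ?_⟩
  · rw [fiberCode, LinearMap.mem_ker]
    simp only [x, map_add, Fintype.linearCombination_apply_single, fiberCheck, hq, hs]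
    ext i
    · simp [← add_mul]
    · simp only [Prod.snd_add, Prod.smul_snd, smul_eq_mul, Prod.snd_zero]
      ring
  · have hsupp : ({j | x j ≠ 0} : Finset P) = {p, q, s} := by
      ext j
      grind [Pi.add_apply]
    rw [hammingNorm, hsupp, card_eq_three]
    exact ⟨p, q, s, hne.1, hne.2.2.symm, hne.2.1, rfl⟩

theorem three_le_hammingNorm_of_mem_fiberCode [IsDomain R] [DecidableEq R]
    (ha : Function.Injective fun p => (π p, a p)) {x : P → R} (hx : x ∈ fiberCode π a)
    (hx0 : x ≠ 0) : 3 ≤ hammingNorm x :=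
  le_hammingNorm_of_linearIndepOn
    (fun _ hs => linearIndepOn_fiberCheck_of_card_lt_three ha hs) hx hx0

theorem finrank_fiberCode {K : Type*} [Field K] [Fintype ι] {π : P → ι} {a : P → K}
    (hπ : Function.Surjective π) {p q : P} (hpq : π p = π q) (ha : a p ≠ a q) :
    Module.finrank K (fiberCode π a) + Fintype.card ι + 1 = Fintype.card P := by
  have h := (Fintype.linearCombination K (fiberCheck π a)).finrank_range_add_finrank_ker
  rw [Fintype.range_linearCombination, span_range_fiberCheck hπ hpq ha, finrank_top] at h
  simp only [Module.finrank_prod, Module.finrank_fintype_fun_eq_card, Module.finrank_self] at h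
  rw [fiberCode]
  omega

end FiberCode

theorem natCeil_div_eq_of_add_one_eq_mul {𝕜 : Type*} [Field 𝕜] [LinearOrder 𝕜]
    [IsStrictOrderedRing 𝕜] [FloorSemiring 𝕜] {k m r : ℕ} (hr : 2 ≤ r) (h : k + 1 = m * r) :
    ⌈(k : 𝕜) / r⌉₊ = m := by
  have hm : m ≠ 0 := by
    rintro rfl
    simp at h
  have hr0 : (0 : 𝕜) < r := by exact_mod_cast (by omega : 0 < r)
  rw [Nat.ceil_eq_iff hm, lt_div_iff₀ hr0, div_le_iff₀ hr0]
  norm_cast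
  have hmr : r ≤ m * r := Nat.le_mul_of_pos_left r (Nat.pos_of_ne_zero hm)
  rw [Nat.sub_one_mul]
  omega

theorem optimal_LRC_F11_quintic_surface_general {K P ι : Type*} [Field K] [DecidableEq K]
    [Fintype P] [Fintype ι] [Nonempty ι] [DecidableEq ι] {r : ℕ} (hr : 2 ≤ r) {π : P → ι}
    {a : P → K} (hπ : ∀ i, #{p | π p = i} = r + 1)
    (ha : Function.Injective fun p => (π p, a p)) :
    ∃ C : Submodule K (P → K),
      Module.finrank K C + Fintype.card ι + 1 = Fintype.card P ∧
      (∀ x ∈ C, x ≠ 0 → 3 ≤ hammingNorm x) ∧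
      (∃ x ∈ C, x ≠ 0 ∧ hammingNorm x = 3) ∧
      HasLocality C r ∧
      3 + Module.finrank K C + ⌈(Module.finrank K C : ℚ) / r⌉₊ = Fintype.card P + 2 := by
  have hcard : Fintype.card P = Fintype.card ι * (r + 1) :=
    calc Fintype.card P = ∑ i, #{p | π p = i} := card_eq_sum_card_fiberwise (by simp)
      _ = Fintype.card ι * (r + 1) := by simp [hπ]
  have hsurj : Function.Surjective π := fun i => by
    obtain ⟨p, hp⟩ := card_pos.mp (r.succ_pos.trans_eq (hπ i).symm)
    exact ⟨p, by simpa using hp⟩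
  have hsep {p q : P} (hpq : π p = π q) (hne : p ≠ q) : a p ≠ a q :=
    fun h => hne (ha (Prod.ext hpq h))
  have i : ι := Classical.arbitrary ι
  obtain ⟨p, q, s, hp, hq, hs, hpq, hps, hqs⟩ :=
    two_lt_card_iff.mp ((by omega : 2 < r + 1).trans_eq (hπ i).symm)
  simp only [mem_filter, mem_univ, true_and] at hp hq hs
  have hdim := finrank_fiberCode hsurj (hp.trans hq.symm) (hsep (hp.trans hq.symm) hpq)
  obtain ⟨x, hx, hx3⟩ := exists_mem_fiberCode_hammingNorm_eq_three (π := π)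
    (hq.trans hp.symm) (hs.trans hp.symm) (hsep (hp.trans hq.symm) hpq)
    (hsep (hq.trans hs.symm) hqs) (hsep (hs.trans hp.symm) hps.symm)
  refine ⟨fiberCode π a, hdim, fun _ => three_le_hammingNorm_of_mem_fiberCode ha,
    ⟨x, hx, hammingNorm_ne_zero_iff.mp (by omega), hx3⟩,
    hasLocality_fiberCode fun j => (hπ j).le, ?_⟩
  rw [natCeil_div_eq_of_add_one_eq_mul hr (m := Fintype.card ι) (by lia)]
  omega

theorem injective_divNat_natCast {m n q : ℕ} (hnq : n ≤ q) :
    Function.Injective fun p : Fin (m * n) => (p.divNat, ((p : ℕ) : ZMod q)) := by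
  intro p s h
  have hdiv : (p : ℕ) / n = s / n := congrArg (fun y : Fin m × ZMod q => (y.1 : ℕ)) h
  have hmod : p ≡ s [MOD q] := (ZMod.natCast_eq_natCast_iff _ _ _).mp (congrArg Prod.snd h)
  have hn : 0 < n := Nat.pos_of_mul_pos_left p.pos
  have hclose : |((s : ℕ) : ℤ) - (p : ℕ)| < q := by
    have hp := Nat.div_add_mod p n
    have hs := Nat.div_add_mod s n
    have hpn := Nat.mod_lt p hn
    have hsn := Nat.mod_lt s hn
    rw [hdiv] at hp
    grind
  exact Fin.ext (hmod.eq_of_abs_lt hclose)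

/-- There is a linear code over the field with 11 elements of length 110, dimension 87,
minimum distance exactly 3, and locality 4; its parameters meet the Singleton-type
bound d ≤ n - k - ⌈k/r⌉ + 2 with equality, and n = 11 ^ 2 - 11 for q = 11. -/
theorem optimal_LRC_F11_quintic_surface :
    (∃ C : Submodule (ZMod 11) (Fin 110 → ZMod 11),
      Module.finrank (ZMod 11) C = 87 ∧
      (∀ x : Fin 110 → ZMod 11, x ∈ C → x ≠ 0 →
        3 ≤ Nat.card {i : Fin 110 // x i ≠ 0}) ∧
      (∃ x : Fin 110 → ZMod 11, x ∈ C ∧ x ≠ 0 ∧ Nat.card {i : Fin 110 // x i ≠ 0} = 3) ∧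
      (∀ i : Fin 110, ∃ I : Finset (Fin 110), i ∉ I ∧ I.card ≤ 4 ∧
        ∀ x ∈ C, ∀ y ∈ C, (∀ j ∈ I, x j = y j) → x i = y i)) ∧
    (3 : ℕ) = 110 - 87 - ⌈(87 : ℚ) / 4⌉₊ + 2 ∧
    (110 : ℕ) = 11 ^ 2 - 11 := by
  have : Fact (Nat.Prime 11) := ⟨by norm_num⟩
  obtain ⟨C, hdim, hmin, hword, hloc, hopt⟩ := optimal_LRC_F11_quintic_surface_general
    (P := Fin 110) (r := 4) (by norm_num) (by decide +kernel)
    (injective_divNat_natCast (m := 22) (n := 5) (q := 11) (by norm_num))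
  have hC : Module.finrank (ZMod 11) C = 87 := by simpa using hdim
  rw [hC, Fintype.card_fin, Nat.cast_ofNat, Nat.cast_ofNat] at hopt
  simp only [natCard_ne_zero_eq_hammingNorm]
  exact ⟨⟨C, hC, hmin, hword, hloc⟩, by omega, by norm_num⟩
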